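/- Let Θ ⊆ ℝ^d be convex, f₁, …, f_n : ℝ^d → ℝ convex and differentiable, θ, θ* ∈ Θ, α > 0, and let p ∈ ℝ^n be a probability vector with p_i > 0 and Σ_i p_i = 1, with importance weights w_i = 1/(n p_i). For each i let θ'_i ∈ Θ be a Euclidean projection of θ − α w_i ∇f_i(θ) onto Θ. Then, with f = (1/n) Σ_i f_i: f(θ) − f(θ*) ≤ (α/2) Σ_{i=1}^n p_i w_i² ‖∇f_i(θ)‖₂² + (1/(2α)) ( ‖θ − θ*‖₂² − Σ_{i=1}^n p_i ‖θ'_i − θ*‖₂² ). -/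

import Mathlib

lemma aux_grad {d : ℕ} (f : EuclideanSpace ℝ (Fin d) → ℝ) (hc : ConvexOn ℝ Set.univ f)
    (hd : Differentiable ℝ f) (x y : EuclideanSpace ℝ (Fin d)) :
    f x - f y ≤ inner ℝ (gradient f x) (x - y) := by
  have hg : HasFDerivAt f (InnerProductSpace.toDual ℝ _ (gradient f x)) x :=
    (hd x).hasGradientAt.hasFDerivAt
  have hl : HasDerivAt (fun t : ℝ => AffineMap.lineMap x y t) (y - x) (0 : ℝ) :=
    AffineMap.hasDerivAt_lineMap
  have hcomp : HasDerivAt (fun t : ℝ => f (AffineMap.lineMap x y t))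
      (inner ℝ (gradient f x) (y - x)) (0 : ℝ) := by
    have h0 : AffineMap.lineMap x y (0 : ℝ) = x := AffineMap.lineMap_apply_zero x y
    have := HasFDerivAt.comp_hasDerivAt (0 : ℝ) (by rw [h0]; exact hg) hl
    simpa [Function.comp_def] using this
  have hcv : ConvexOn ℝ Set.univ (fun t : ℝ => f (AffineMap.lineMap x y t)) := by
    have := hc.comp_affineMap (AffineMap.lineMap x y : ℝ →ᵃ[ℝ] EuclideanSpace ℝ (Fin d))
    simpa [Function.comp_def] using this
  have h := hcv.le_slope_of_hasDerivAt (Set.mem_univ 0) (Set.mem_univ 1) one_pos hcomp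
  simp only [slope_def_field, AffineMap.lineMap_apply_zero, AffineMap.lineMap_apply_one,
    sub_zero, div_one] at h
  have e : inner ℝ (gradient f x) (x - y) = - inner ℝ (gradient f x) (y - x) := by
    rw [← inner_neg_right, neg_sub]
  linarith

lemma aux_proj {d : ℕ} {K : Set (EuclideanSpace ℝ (Fin d))} (hK : Convex ℝ K)
    {v z u : EuclideanSpace ℝ (Fin d)} (hv : v ∈ K) (hu : u ∈ K)
    (h : ∀ y ∈ K, ‖v - z‖ ≤ ‖y - z‖) : ‖v - u‖ ^ 2 ≤ ‖z - u‖ ^ 2 := by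
  have : Nonempty K := ⟨⟨v, hv⟩⟩
  have h1 : ‖z - v‖ = ⨅ y : K, ‖z - y‖ := by
    apply le_antisymm
    · refine le_ciInf fun y => ?_
      rw [norm_sub_rev z v, norm_sub_rev z]
      exact h y y.2
    · exact ciInf_le (f := fun y : K => ‖z - y‖)
        ⟨0, fun _ ⟨_, h⟩ => h ▸ norm_nonneg _⟩ ⟨v, hv⟩
  have h2 := (norm_eq_iInf_iff_real_inner_le_zero hK hv).1 h1 u hu
  have h3 : z - u = (z - v) - (u - v) := by abel
  rw [h3, norm_sub_sq_real (z - v), norm_sub_rev v u]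
  nlinarith [sq_nonneg ‖z - v‖]

/-- per-step inequality for adaptive-probabilities SGD.  With a probability
vector `p` (all entries positive, summing to 1), importance weights `w_i = 1/(n p_i)`, and
`θ'_i ∈ Θ` a Euclidean projection of `θ − α w_i ∇f_i(θ)` onto `Θ`, one has, for
`f = (1/n) Σ_i f_i`:
`f(θ) − f(θ*) ≤ (α/2) Σ_i p_i w_i² ‖∇f_i(θ)‖² + (1/(2α))(‖θ−θ*‖² − Σ_i p_i ‖θ'_i−θ*‖²)`. -/
theorem stmt_5 (d n : ℕ) (hn : 0 < n)
    (Θ : Set (EuclideanSpace ℝ (Fin d))) (hΘconv : Convex ℝ Θ)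
    (f : Fin n → EuclideanSpace ℝ (Fin d) → ℝ)
    (hconv : ∀ i, ConvexOn ℝ Set.univ (f i))
    (hdiff : ∀ i, Differentiable ℝ (f i))
    (θ θstar : EuclideanSpace ℝ (Fin d)) (hθ : θ ∈ Θ) (hθstar : θstar ∈ Θ)
    (α : ℝ) (hα : 0 < α)
    (p : Fin n → ℝ) (hp : ∀ i, 0 < p i) (hpsum : ∑ i, p i = 1)
    (w : Fin n → ℝ) (hw : ∀ i, w i = 1 / ((n : ℝ) * p i))
    (θ' : Fin n → EuclideanSpace ℝ (Fin d))
    (hmem : ∀ i, θ' i ∈ Θ)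
    (hproj : ∀ i, ∀ u ∈ Θ,
      ‖θ' i - (θ - (α * w i) • gradient (f i) θ)‖ ≤ ‖u - (θ - (α * w i) • gradient (f i) θ)‖) :
    (1 / (n : ℝ)) * ∑ i, f i θ - (1 / (n : ℝ)) * ∑ i, f i θstar ≤
      (α / 2) * (∑ i, p i * (w i) ^ 2 * ‖gradient (f i) θ‖ ^ 2) +
      (1 / (2 * α)) * (‖θ - θstar‖ ^ 2 - ∑ i, p i * ‖θ' i - θstar‖ ^ 2) := by
  have hn' : (0 : ℝ) < n := by exact_mod_cast hn
  have key : ∀ i, (1 / (n : ℝ)) * (f i θ - f i θstar) ≤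
      (α / 2) * (p i * (w i) ^ 2 * ‖gradient (f i) θ‖ ^ 2) +
      (1 / (2 * α)) * (p i * ‖θ - θstar‖ ^ 2 - p i * ‖θ' i - θstar‖ ^ 2) := by
    intro i
    have h1 := aux_grad (f i) (hconv i) (hdiff i) θ θstar
    have h2 := aux_proj hΘconv (hmem i) hθstar (hproj i)
    have e : θ - (α * w i) • gradient (f i) θ - θstar =
      (θ - θstar) - (α * w i) • gradient (f i) θ := by abel
    rw [e, norm_sub_sq_real (θ - θstar), norm_smul, mul_pow, Real.norm_eq_abs, sq_abs, inner_smul_right,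
      real_inner_comm] at h2
    have hpw : 1 / (n : ℝ) = p i * w i := by
      rw [hw]; have := (hp i).ne'; field_simp
    have hpw0 : 0 < p i * w i := hpw ▸ by positivity
    rw [hpw]
    have h3 := mul_le_mul_of_nonneg_left h1 hpw0.le
    have h4 := mul_le_mul_of_nonneg_left h2 (mul_pos (one_div_pos.2 (mul_pos two_pos hα)) (hp i)).le
    have e2 : 1 / (2 * α) * p i * (‖θ - θstar‖ ^ 2 -
        2 * (α * w i * inner ℝ (gradient (f i) θ) (θ - θstar)) +
        (α * w i) ^ 2 * ‖gradient (f i) θ‖ ^ 2) =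
        1 / (2 * α) * p i * ‖θ - θstar‖ ^ 2
        - p i * w i * inner ℝ (gradient (f i) θ) (θ - θstar)
        + (α / 2) * (p i * (w i) ^ 2 * ‖gradient (f i) θ‖ ^ 2) := by
      field_simp
    rw [e2] at h4
    linarith
  have hs := Finset.sum_le_sum fun i (_ : i ∈ Finset.univ) => key i
  rw [Finset.sum_add_distrib, ← Finset.mul_sum, ← Finset.mul_sum, ← Finset.mul_sum,
    Finset.sum_sub_distrib, Finset.sum_sub_distrib, ← Finset.sum_mul, hpsum, one_mul,
    mul_sub] at hs
  exact hs
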